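/- arXiv:0809.0551 — 3 statements merged into one kernel-verified Lean document; each statement's English description precedes it below -/
import Mathlib

section
/- For all integers k ≥ 1 and n ≥ 1, the number of smooth words of length n over the alphabet [k] satisfies sw_{n,k} = (2/(k+1)) · ∑_{0 ≤ j ≤ (k−1)/2} cot²((2j+1)π/(2(k+1))) · (1 + 2cos((2j+1)π/(k+1)))^{n−1}, where the sum runs over integers j with 0 ≤ j ≤ (k−1)/2. -/
/-!
The matrix counting transitions between letters is the identity plus the adjacency matrix of a path
on `k` vertices. Writing `φ_j = (2j+1)π/(2(k+1))`, its eigenvectors `p ↦ sin (2pφ_j)` have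
eigenvalue `1 + 2 cos (2φ_j)`, since each of them vanishes at `p = 0` and `p = k + 1`.
The all-ones vector, which counts words of length one, expands as
`1 = (k+1)⁻¹ ∑_{j ≤ k} cot φ_j sin (2pφ_j)` (`sum_sin_mul_cot`), so iterating the transition
counts smooth words by their first letter (`wordsFrom_eq`). The entries of the `j`-th
eigenvector sum to `cot φ_j` (`sum_sin_halfAngle`), which produces the square of the cotangent.
Letting `j` run over `0, …, k` makes the trigonometric sums telescope; the reflection
`j ↦ k - j` sends `φ_j` to `π - φ_j`, so this full sum is twice the sum in the theorem
(`sum_eq_two_mul_half`), the middle term `cot (π/2)` being zero when `k` is even.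
-/

open Real Filter Finset

/-- A word of length `n` over a `k`-letter alphabet (represented as `Fin k`,
a relabeling of `{1,…,k}`) is smooth if adjacent letters differ by at most 1. -/
def IsSmooth {n k : ℕ} (σ : Fin n → Fin k) : Prop :=
  ∀ i : ℕ, ∀ hi : i + 1 < n,
    |((σ ⟨i + 1, hi⟩ : ℕ) : ℤ) - ((σ ⟨i, Nat.lt_of_succ_lt hi⟩ : ℕ) : ℤ)| ≤ 1

/-- A word is smooth cyclic if it is smooth and its last and first letters differ
by at most 1. -/
def IsSmoothCyclic {n k : ℕ} (σ : Fin n → Fin k) : Prop :=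
  IsSmooth σ ∧ ∀ h : 0 < n,
    |((σ ⟨n - 1, Nat.sub_lt h Nat.one_pos⟩ : ℕ) : ℤ) - ((σ ⟨0, h⟩ : ℕ) : ℤ)| ≤ 1

/-- `sw n k` is the number of smooth words of length `n` over a `k`-letter alphabet. -/
noncomputable def sw (n k : ℕ) : ℕ := Nat.card {σ : Fin n → Fin k // IsSmooth σ}

/-- `scw n k` is the number of smooth cyclic words of length `n` over a `k`-letter
alphabet. -/
noncomputable def scw (n k : ℕ) : ℕ := Nat.card {σ : Fin n → Fin k // IsSmoothCyclic σ}

/-- Two words are rotation equivalent if one is a cyclic rotation of the other. -/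
def RotEquiv {n k : ℕ} (σ τ : Fin n → Fin k) : Prop :=
  ∃ r : Fin n, ∀ i : Fin n, σ i = τ (i + r)

/-- `sn n k` is the number of smooth necklaces of length `n` over a `k`-letter
alphabet, i.e. the number of rotation-equivalence classes of smooth cyclic words. -/
noncomputable def sn (n k : ℕ) : ℕ :=
  Nat.card (Quot (fun σ τ : {σ : Fin n → Fin k // IsSmoothCyclic σ} => RotEquiv σ.1 τ.1))

/-- `swF n k i` is the number of smooth words of length `n` over the alphabet
`{1,…,k}` whose first letter is `i` (letters of `Fin k` are `1`-indexed via `+1`). -/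
noncomputable def swF (n k i : ℕ) : ℕ :=
  Nat.card {σ : Fin n → Fin k // IsSmooth σ ∧ ∀ h : 0 < n, (σ ⟨0, h⟩ : ℕ) + 1 = i}

/-- `swFL n k i j` is the number of smooth words of length `n` over the alphabet
`{1,…,k}` with first letter `i` and last letter `j`. -/
noncomputable def swFL (n k i j : ℕ) : ℕ :=
  Nat.card {σ : Fin n → Fin k // IsSmooth σ ∧ ∀ h : 0 < n,
    (σ ⟨0, h⟩ : ℕ) + 1 = i ∧ (σ ⟨n - 1, Nat.sub_lt h Nat.one_pos⟩ : ℕ) + 1 = j}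

/-- Chebyshev polynomial of the second kind, as a real function, with integer index. -/
noncomputable def Ueval (r : ℤ) (t : ℝ) : ℝ := (Polynomial.Chebyshev.U ℝ r).eval t

/-! ### Trigonometric sums -/

/-- The half-angle `(2j+1)π/(2(k+1))`; the eigenvalues are `1 + 2 cos (2 * halfAngle k j)`. -/
noncomputable def halfAngle (k j : ℕ) : ℝ := (2 * (j : ℝ) + 1) * Real.pi / (2 * ((k : ℝ) + 1))

lemma sin_halfAngle_ne_zero {k j : ℕ} (hj : j < k + 1) : Real.sin (halfAngle k j) ≠ 0 := by
  have hj' : (j : ℝ) + 1 ≤ (k : ℝ) + 1 := by exact_mod_cast hj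
  have hpi := Real.pi_pos
  apply ne_of_gt
  apply Real.sin_pos_of_pos_of_lt_pi
  · unfold halfAngle; positivity
  · unfold halfAngle
    rw [div_lt_iff₀ (by positivity)]
    nlinarith

lemma two_mul_halfAngle (k j : ℕ) :
    2 * halfAngle k j * ((k : ℝ) + 1) = (2 * (j : ℝ) + 1) * Real.pi := by
  unfold halfAngle
  field_simp

lemma sin_mul_two_halfAngle (k j : ℕ) : Real.sin (((k : ℝ) + 1) * (2 * halfAngle k j)) = 0 := by
  rw [mul_comm, two_mul_halfAngle]
  exact_mod_cast Real.sin_nat_mul_pi (2 * j + 1)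

lemma halfAngle_reflect {k j : ℕ} (hj : j ≤ k) : halfAngle k (k - j) = Real.pi - halfAngle k j := by
  unfold halfAngle
  push_cast [hj]
  field_simp
  ring

/-- Multiplying by `2 sin (lπ/(k+1))` makes the sum telescope. -/
lemma sum_cos_halfAngle {k l : ℕ} (h0 : 0 < l) (hl : l < k + 1) :
    ∑ j ∈ range (k + 1), Real.cos ((l : ℝ) * (2 * halfAngle k j)) = 0 := by
  have hs : Real.sin ((l : ℝ) * Real.pi / ((k : ℝ) + 1)) ≠ 0 := by
    have hl' : (l : ℝ) < (k : ℝ) + 1 := by exact_mod_cast hl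
    have h0' : (0 : ℝ) < l := by exact_mod_cast h0
    have hpi := Real.pi_pos
    apply ne_of_gt
    apply Real.sin_pos_of_pos_of_lt_pi
    · positivity
    · rw [div_lt_iff₀ (by positivity)]
      nlinarith
  have key : ∀ j ∈ range (k + 1),
      2 * Real.sin ((l : ℝ) * Real.pi / ((k : ℝ) + 1)) * Real.cos ((l : ℝ) * (2 * halfAngle k j))
      = Real.sin (2 * l * Real.pi * ((j + 1 : ℕ) : ℝ) / ((k : ℝ) + 1))
        - Real.sin (2 * l * Real.pi * (j : ℝ) / ((k : ℝ) + 1)) := by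
    intro j _
    have e1 : 2 * l * Real.pi * ((j + 1 : ℕ) : ℝ) / ((k : ℝ) + 1)
        = (l : ℝ) * (2 * halfAngle k j) + (l : ℝ) * Real.pi / ((k : ℝ) + 1) := by
      unfold halfAngle; push_cast; field_simp; ring
    have e2 : 2 * l * Real.pi * (j : ℝ) / ((k : ℝ) + 1)
        = (l : ℝ) * (2 * halfAngle k j) - (l : ℝ) * Real.pi / ((k : ℝ) + 1) := by
      unfold halfAngle; field_simp; ring
    rw [e1, e2, Real.sin_add, Real.sin_sub]
    ring
  have h := Finset.sum_congr rfl key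
  rw [Finset.sum_range_sub
    (fun j : ℕ => Real.sin (2 * l * Real.pi * (j : ℝ) / ((k : ℝ) + 1))), ← Finset.mul_sum] at h
  have e3 : 2 * l * Real.pi * ((k + 1 : ℕ) : ℝ) / ((k : ℝ) + 1) = ((2 * l : ℕ) : ℝ) * Real.pi := by
    push_cast; field_simp
  rw [e3, Real.sin_nat_mul_pi] at h
  simp only [Nat.cast_zero, mul_zero, zero_div, Real.sin_zero, sub_zero] at h
  exact (mul_eq_zero.mp h).resolve_left (mul_ne_zero two_ne_zero hs)

/-- The expansion of the all-ones vector in the eigenvectors `p ↦ sin (2pφ_j)`. -/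
lemma sum_sin_mul_cot {k : ℕ} (p : ℕ) (hp : p < k) :
    ∑ j ∈ range (k + 1), Real.sin (((p : ℝ) + 1) * (2 * halfAngle k j)) * Real.cot (halfAngle k j)
      = (k : ℝ) + 1 := by
  induction p with
  | zero =>
    have key : ∀ j ∈ range (k + 1),
        Real.sin ((((0 : ℕ) : ℝ) + 1) * (2 * halfAngle k j)) * Real.cot (halfAngle k j)
        = 1 + Real.cos (((1 : ℕ) : ℝ) * (2 * halfAngle k j)) := by
      intro j hj
      have hs := sin_halfAngle_ne_zero (mem_range.mp hj)
      rw [Real.cot_eq_cos_div_sin]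
      push_cast
      rw [zero_add, one_mul, Real.sin_two_mul, Real.cos_two_mul]
      field_simp
      ring
    rw [Finset.sum_congr rfl key, Finset.sum_add_distrib, sum_cos_halfAngle one_pos (by omega)]
    simp
  | succ p ih =>
    have key : ∀ j ∈ range (k + 1),
        Real.sin ((((p + 1 : ℕ) : ℝ) + 1) * (2 * halfAngle k j)) * Real.cot (halfAngle k j)
        = Real.sin (((p : ℝ) + 1) * (2 * halfAngle k j)) * Real.cot (halfAngle k j)
          + (Real.cos (((p + 2 : ℕ) : ℝ) * (2 * halfAngle k j))
            + Real.cos (((p + 1 : ℕ) : ℝ) * (2 * halfAngle k j))) := by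
      intro j hj
      have hs := sin_halfAngle_ne_zero (mem_range.mp hj)
      rw [Real.cot_eq_cos_div_sin]
      generalize halfAngle k j = x at hs
      -- Both angles are centred at `(2p+3)x`, at distance `x`.
      have e1 : (((p + 1 : ℕ) : ℝ) + 1) * (2 * x) = (2 * (p : ℝ) + 3) * x + x := by
        push_cast; ring
      have e2 : ((p : ℝ) + 1) * (2 * x) = (2 * (p : ℝ) + 3) * x - x := by ring
      have e3 : ((p + 2 : ℕ) : ℝ) * (2 * x) = (2 * (p : ℝ) + 3) * x + x := by
        push_cast; ring
      have e4 : ((p + 1 : ℕ) : ℝ) * (2 * x) = (2 * (p : ℝ) + 3) * x - x := by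
        push_cast; ring
      rw [e1, e2, e3, e4, Real.sin_add, Real.sin_sub, Real.cos_add, Real.cos_sub]
      field_simp
      ring
    rw [Finset.sum_congr rfl key, Finset.sum_add_distrib, Finset.sum_add_distrib, ih (by omega),
      sum_cos_halfAngle (by omega) (by omega), sum_cos_halfAngle (by omega) (by omega)]
    ring

/-- The entries of the `j`-th eigenvector sum to `cot φ_j`: multiplying by `2 sin φ_j` makes the
sum telescope to `2 cos φ_j`. -/
lemma sum_sin_halfAngle {k j : ℕ} (hj : j < k + 1) :
    ∑ p ∈ range k, Real.sin (((p : ℝ) + 1) * (2 * halfAngle k j)) = Real.cot (halfAngle k j) := by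
  have hs := sin_halfAngle_ne_zero hj
  have key : ∀ p ∈ range k,
      2 * Real.sin (halfAngle k j) * Real.sin (((p : ℝ) + 1) * (2 * halfAngle k j))
      = Real.cos ((2 * (p : ℝ) + 1) * halfAngle k j)
        - Real.cos ((2 * ((p + 1 : ℕ) : ℝ) + 1) * halfAngle k j) := by
    intro p _
    have e1 : (2 * (p : ℝ) + 1) * halfAngle k j
        = ((p : ℝ) + 1) * (2 * halfAngle k j) - halfAngle k j := by ring
    have e2 : (2 * ((p + 1 : ℕ) : ℝ) + 1) * halfAngle k j
        = ((p : ℝ) + 1) * (2 * halfAngle k j) + halfAngle k j := by push_cast; ring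
    rw [e1, e2, Real.cos_add, Real.cos_sub]
    ring
  have h := Finset.sum_congr rfl key
  rw [Finset.sum_range_sub'
    (fun p : ℕ => Real.cos ((2 * (p : ℝ) + 1) * halfAngle k j)), ← Finset.mul_sum] at h
  have e3 : (2 * (k : ℝ) + 1) * halfAngle k j
      = ((2 * j + 1 : ℕ) : ℝ) * Real.pi - halfAngle k j := by
    have := two_mul_halfAngle k j
    push_cast
    linarith
  rw [e3, Real.cos_nat_mul_pi_sub, Odd.neg_one_pow ⟨j, rfl⟩] at h
  simp only [Nat.cast_zero, mul_zero, zero_add, one_mul, neg_mul] at h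
  rw [Real.cot_eq_cos_div_sin, eq_div_iff hs]
  linarith

/-! ### Smooth words by first letter -/

lemma isSmooth_cons {n k : ℕ} (a b : Fin k) (τ : Fin n → Fin k) :
    IsSmooth (Fin.cons a (Fin.cons b τ : Fin (n + 1) → Fin k) : Fin (n + 2) → Fin k) ↔
      |((b : ℕ) : ℤ) - ((a : ℕ) : ℤ)| ≤ 1 ∧
        IsSmooth (Fin.cons b τ : Fin (n + 1) → Fin k) := by
  have e (i : ℕ) (hi : i + 1 < n + 2) :
      (Fin.cons a (Fin.cons b τ : Fin (n + 1) → Fin k) : Fin (n + 2) → Fin k) ⟨i + 1, hi⟩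
        = (Fin.cons b τ : Fin (n + 1) → Fin k) ⟨i, Nat.lt_of_succ_lt_succ hi⟩ :=
    Fin.cons_succ (α := fun _ => Fin k) a _ ⟨i, Nat.lt_of_succ_lt_succ hi⟩
  have e0 {m : ℕ} (c : Fin k) (ρ : Fin m → Fin k) (h : 0 < m + 1) :
      (Fin.cons c ρ : Fin (m + 1) → Fin k) ⟨0, h⟩ = c :=
    Fin.cons_zero (α := fun _ => Fin k) c ρ
  constructor
  · intro h
    refine ⟨?_, fun i hi => ?_⟩
    · have h' := h 0 (by omega)
      rwa [e, e0, e0] at h'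
    · have h' := h (i + 1) (by omega)
      rwa [e, e] at h'
  · rintro ⟨h0, h⟩ i hi
    cases i with
    | zero => rwa [e, e0, e0]
    | succ i =>
      rw [e, e]
      exact h i (by omega)

open Classical in
/-- The number of smooth words of length `n + 1` with first letter `a`, as a real number. -/
noncomputable def wordsFrom (n : ℕ) {k : ℕ} (a : Fin k) : ℝ :=
  ∑ τ : Fin n → Fin k, if IsSmooth (Fin.cons a τ : Fin (n + 1) → Fin k) then 1 else 0

lemma sw_succ (n k : ℕ) : (sw (n + 1) k : ℝ) = ∑ a : Fin k, wordsFrom n a := by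
  classical
  unfold sw wordsFrom
  rw [Nat.card_eq_fintype_card, Fintype.card_subtype, Finset.card_filter]
  push_cast
  rw [← Fintype.sum_prod_type', ← (Fin.consEquiv (fun _ : Fin (n + 1) => Fin k)).sum_comp]
  rfl

lemma wordsFrom_zero {k : ℕ} (a : Fin k) : wordsFrom 0 a = 1 := by
  have h : ∀ τ : Fin 0 → Fin k, IsSmooth (Fin.cons a τ : Fin 1 → Fin k) :=
    fun τ i hi => absurd hi (by omega)
  simp [wordsFrom, h]

lemma wordsFrom_succ (n : ℕ) {k : ℕ} (a : Fin k) :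
    wordsFrom (n + 1) a =
      ∑ b : Fin k, if |((b : ℕ) : ℤ) - ((a : ℕ) : ℤ)| ≤ 1 then wordsFrom n b else 0 := by
  classical
  unfold wordsFrom
  rw [← (Fin.consEquiv (fun _ : Fin (n + 1) => Fin k)).sum_comp, Fintype.sum_prod_type]
  refine Finset.sum_congr rfl fun b _ => ?_
  refine (Finset.sum_congr rfl fun τ _ => if_congr (isSmooth_cons a b τ) rfl rfl).trans ?_
  by_cases h : |((b : ℕ) : ℤ) - ((a : ℕ) : ℤ)| ≤ 1 <;> simp [h]

/-- The transition acts on a vector vanishing at the two fictitious letters `0` and `k + 1`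
without a boundary correction. -/
lemma sum_neighbours {k : ℕ} (g : ℕ → ℝ) (h0 : g 0 = 0) (hk : g (k + 1) = 0) (a : Fin k) :
    (∑ b : Fin k, if |((b : ℕ) : ℤ) - ((a : ℕ) : ℤ)| ≤ 1 then g (b + 1) else 0)
      = g a + g (a + 1) + g (a + 2) := by
  have ha := a.isLt
  rw [Fin.sum_univ_eq_sum_range
    (fun b : ℕ => if |(b : ℤ) - ((a : ℕ) : ℤ)| ≤ 1 then g (b + 1) else 0)]
  have h1 : ∑ b ∈ range k, (if |(b : ℤ) - ((a : ℕ) : ℤ)| ≤ 1 then g (b + 1) else 0)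
      = ∑ p ∈ range (k + 2), if |(p : ℤ) - ((a : ℕ) : ℤ) - 1| ≤ 1 then g p else 0 := by
    rw [Finset.sum_range_succ, Finset.sum_range_succ', h0, hk]
    simp only [ite_self, add_zero]
    refine Finset.sum_congr rfl fun b _ => ?_
    have : ((b + 1 : ℕ) : ℤ) - ((a : ℕ) : ℤ) - 1 = (b : ℤ) - ((a : ℕ) : ℤ) := by
      push_cast; ring
    rw [this]
  have h2 : (range (k + 2)).filter (fun p : ℕ => |(p : ℤ) - ((a : ℕ) : ℤ) - 1| ≤ 1)
      = {(a : ℕ), (a : ℕ) + 1, (a : ℕ) + 2} := by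
    ext p
    simp only [mem_filter, mem_range, mem_insert, mem_singleton, abs_le]
    omega
  rw [h1, ← Finset.sum_filter, h2, Finset.sum_insert (by simp), Finset.sum_insert (by simp),
    Finset.sum_singleton]
  ring

/-- The spectral expansion of the number of smooth words with a given first letter. -/
lemma wordsFrom_eq (n : ℕ) {k : ℕ} (a : Fin k) :
    wordsFrom n a = ((k : ℝ) + 1)⁻¹ * ∑ j ∈ range (k + 1),
      Real.sin ((((a : ℕ) : ℝ) + 1) * (2 * halfAngle k j)) * Real.cot (halfAngle k j)
        * (1 + 2 * Real.cos (2 * halfAngle k j)) ^ n := by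
  induction n generalizing a with
  | zero =>
    simp only [pow_zero, mul_one]
    rw [wordsFrom_zero, sum_sin_mul_cot _ a.isLt, inv_mul_cancel₀ (by positivity)]
  | succ n ih =>
    rw [wordsFrom_succ]
    let g : ℕ → ℝ := fun p => ((k : ℝ) + 1)⁻¹ * ∑ j ∈ range (k + 1),
      Real.sin ((p : ℝ) * (2 * halfAngle k j)) * Real.cot (halfAngle k j)
        * (1 + 2 * Real.cos (2 * halfAngle k j)) ^ n
    have hg : ∀ b : Fin k, wordsFrom n b = g (b + 1) := by
      intro b
      rw [ih b]
      simp [g]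
    have h0 : g 0 = 0 := by simp [g]
    have hk : g (k + 1) = 0 := by simp [g, sin_mul_two_halfAngle]
    simp only [hg]
    rw [sum_neighbours g h0 hk a]
    simp only [g, ← mul_add, ← Finset.sum_add_distrib]
    congr 1
    refine Finset.sum_congr rfl fun j _ => ?_
    generalize 2 * halfAngle k j = x
    have e1 : ((a : ℕ) : ℝ) * x = (((a : ℕ) : ℝ) + 1) * x - x := by ring
    have e2 : (((a : ℕ) + 2 : ℕ) : ℝ) * x = (((a : ℕ) : ℝ) + 1) * x + x := by push_cast; ring
    rw [e1, e2, Real.sin_sub, Real.sin_add]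
    push_cast
    ring

lemma sw_succ_eq (n k : ℕ) :
    (sw (n + 1) k : ℝ) = ((k : ℝ) + 1)⁻¹ * ∑ j ∈ range (k + 1),
      Real.cot (halfAngle k j) ^ 2 * (1 + 2 * Real.cos (2 * halfAngle k j)) ^ n := by
  rw [sw_succ]
  simp only [wordsFrom_eq]
  rw [← Finset.mul_sum, Finset.sum_comm]
  congr 1
  refine Finset.sum_congr rfl fun j hj => ?_
  rw [← Finset.sum_mul, ← Finset.sum_mul, Fin.sum_univ_eq_sum_range
    (fun a : ℕ => Real.sin (((a : ℝ) + 1) * (2 * halfAngle k j))), sum_sin_halfAngle (mem_range.mp hj)]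
  ring

/-! ### Folding the spectral sum -/

/-- A sum over `0, …, k` invariant under `j ↦ k - j` and vanishing at the fixed point of that
reflection is twice its lower half. -/
lemma sum_eq_two_mul_half {k : ℕ} (hk : 1 ≤ k) (F : ℕ → ℝ) (hF : ∀ j ≤ k, F (k - j) = F j)
    (hmid : ∀ j, 2 * j = k → F j = 0) :
    ∑ j ∈ range (k + 1), F j = 2 * ∑ j ∈ range ((k - 1) / 2 + 1), F j := by
  set h := (k - 1) / 2 + 1 with hh
  have hrefl : ∑ j ∈ range h, F (k + 1 - h + j) = ∑ j ∈ range h, F j := by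
    rw [← Finset.sum_range_reflect]
    refine Finset.sum_congr rfl fun j hj => ?_
    have := mem_range.mp hj
    rw [← hF j (by omega)]
    congr 1
    omega
  have hlow : ∑ j ∈ range (k + 1 - h), F j = ∑ j ∈ range h, F j := by
    rcases Nat.even_or_odd' k with ⟨m, hm | hm⟩
    · rw [show k + 1 - h = h + 1 by omega, Finset.sum_range_succ, hmid h (by omega), add_zero]
    · rw [show k + 1 - h = h by omega]
  have hsplit := Finset.sum_range_add F (k + 1 - h) h
  rw [show k + 1 - h + h = k + 1 by omega] at hsplit
  rw [hsplit, hrefl, hlow, two_mul]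

/-- Theorem 2.3 (second form): explicit formula for the number of smooth words,
summing over odd indices `2j+1` with `0 ≤ j ≤ (k-1)/2`. -/
theorem smooth_words_explicit_odd (k n : ℕ) (hk : 1 ≤ k) (hn : 1 ≤ n) :
    (sw n k : ℝ) = (2 / ((k : ℝ) + 1)) * ∑ j ∈ Finset.range ((k - 1) / 2 + 1),
      (Real.cot ((2 * (j : ℝ) + 1) * Real.pi / (2 * ((k : ℝ) + 1)))) ^ 2 *
        (1 + 2 * Real.cos ((2 * (j : ℝ) + 1) * Real.pi / ((k : ℝ) + 1))) ^ (n - 1) := by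
  obtain ⟨m, rfl⟩ : ∃ m, n = m + 1 := ⟨n - 1, by omega⟩
  have hhalf := sum_eq_two_mul_half hk
    (fun j => Real.cot (halfAngle k j) ^ 2 * (1 + 2 * Real.cos (2 * halfAngle k j)) ^ m)
    (by
      intro j hj
      have hcos : Real.cos (2 * (Real.pi - halfAngle k j)) = Real.cos (2 * halfAngle k j) := by
        rw [Real.cos_two_mul, Real.cos_two_mul, Real.cos_pi_sub, neg_sq]
      simp only [halfAngle_reflect hj, hcos, Real.cot_eq_cos_div_sin, Real.cos_pi_sub,
        Real.sin_pi_sub, neg_div, neg_sq])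
    (by
      intro j hj
      have hx : halfAngle k j = Real.pi / 2 := by
        have : (k : ℝ) = 2 * j := by exact_mod_cast hj.symm
        unfold halfAngle
        rw [this]
        field_simp
      simp [hx, Real.cot_eq_cos_div_sin])
  rw [sw_succ_eq, hhalf, Nat.add_sub_cancel, ← mul_assoc, inv_mul_eq_div]
  congr 1
  refine Finset.sum_congr rfl fun j _ => ?_
  have hdouble : 2 * halfAngle k j = (2 * (j : ℝ) + 1) * Real.pi / ((k : ℝ) + 1) := by
    unfold halfAngle
    field_simp
  rw [hdouble, halfAngle]
end

section
/- Let m ≥ 1 be an integer and let x be a real number such that x ≠ cos(jπ/(m+1)) for every integer j with 1 ≤ j ≤ m. Then (1 + U_{m−1}(x))/U_m(x) = (1/(m+1)) · ∑_{j=1}^{m} (1 + (−1)^{j+1}) sin²(jπ/(m+1)) / (x − cos(jπ/(m+1))). -/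
/-!
Since `U_m` has degree `m` and the `m` simple zeros `x_j = cos θ_j`, `θ_j = jπ/(m+1)`, while
`1 + U_{m-1}` has degree less than `m`, Lagrange interpolation of the numerator at the `x_j` gives
`(1 + U_{m-1}(x)) / U_m(x) = ∑ j, (1 + U_{m-1}(x_j)) / (U_m'(x_j) (x - x_j))`
(`eval_div_eval_eq_sum_of_simple_roots`). The residues follow from two evaluations:
`U_{m-1}(x_j) = sin (jπ - θ_j) / sin θ_j = (-1)^(j+1)` (`eval_U_pred_node`), and, from
`(1 - X²) U_m' = X U_m - (m+1) T_{m+1}`, `sin² θ_j · U_m'(x_j) = (m+1) (-1)^(j+1)`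
(`sin_sq_mul_eval_derivative_U_node`). The sign `(-1)^(j+1)` of the derivative is absorbed by
`(1 + ε) ε = 1 + ε` for `ε = ±1`.
-/

open Real Filter Finset

/-- Partial fractions for a proper quotient of polynomials whose denominator has only the simple
zeros `v i`: the residue at `v i` is `f (v i) / P' (v i)`. -/
theorem eval_div_eval_eq_sum_of_simple_roots {F ι : Type*} [Field F] [DecidableEq ι]
    (s : Finset ι) (v : ι → F) (hv : Set.InjOn v s) (f P : Polynomial F)
    (hP : P.degree = s.card) (hroot : ∀ i ∈ s, P.eval (v i) = 0) (hf : f.degree < s.card)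
    (x : F) (hx : ∀ i ∈ s, x ≠ v i) :
    f.eval x / P.eval x =
      ∑ i ∈ s, f.eval (v i) / (P.derivative.eval (v i) * (x - v i)) := by
  have hP0 : P ≠ 0 := by
    rintro rfl
    simp at hP
  have hlc : P.leadingCoeff ≠ 0 := Polynomial.leadingCoeff_ne_zero.mpr hP0
  have hfac : P = Polynomial.C P.leadingCoeff * Lagrange.nodal s v := by
    apply Polynomial.eq_of_degree_le_of_eval_index_eq s hv hP.le
    · rw [Polynomial.degree_C_mul hlc, Lagrange.degree_nodal, hP]
    · rw [Polynomial.leadingCoeff_mul, Polynomial.leadingCoeff_C,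
        (Lagrange.nodal_monic (s := s) (v := v)).leadingCoeff, mul_one]
    · intro i hi
      rw [hroot i hi, Polynomial.eval_mul, Lagrange.eval_nodal_at_node hi, mul_zero]
  have hnod : (Lagrange.nodal s v).eval x ≠ 0 := by
    rw [Lagrange.eval_nodal]
    exact Finset.prod_ne_zero_iff.mpr fun i hi => sub_ne_zero.mpr (hx i hi)
  have hfx : f.eval x = (Lagrange.nodal s v).eval x *
      ∑ i ∈ s, Lagrange.nodalWeight s v i * (x - v i)⁻¹ * f.eval (v i) := by
    conv_lhs => rw [Lagrange.eq_interpolate hv hf]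
    exact Lagrange.eval_interpolate_not_at_node _ hx
  rw [hfx]
  generalize P.leadingCoeff = c at hlc hfac
  subst hfac
  rw [Polynomial.eval_mul, Polynomial.eval_C, mul_comm c, mul_div_mul_left _ _ hnod,
    Finset.sum_div]
  refine Finset.sum_congr rfl fun i hi => ?_
  rw [Lagrange.nodalWeight_eq_eval_derivative_nodal hi, Polynomial.derivative_C_mul,
    Polynomial.eval_mul, Polynomial.eval_C]
  simp only [div_eq_mul_inv, mul_inv]
  ring

theorem injOn_cos_node (m : ℕ) :
    Set.InjOn (fun j : ℕ => Real.cos ((j : ℝ) * Real.pi / ((m : ℝ) + 1)))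
      (Finset.Icc 1 m : Finset ℕ) := by
  have hm : (0 : ℝ) < (m : ℝ) + 1 := by positivity
  have hmem : ∀ j ∈ (Finset.Icc 1 m : Finset ℕ),
      (j : ℝ) * Real.pi / ((m : ℝ) + 1) ∈ Set.Icc 0 Real.pi := by
    intro j hj
    have hjm : (j : ℝ) ≤ m := by exact_mod_cast (Finset.mem_Icc.mp hj).2
    refine ⟨by positivity, ?_⟩
    rw [div_le_iff₀ hm]
    nlinarith [Real.pi_pos]
  intro i hi j hj hij
  have h := Real.injOn_cos (hmem i hi) (hmem j hj) hij
  rw [div_left_inj' hm.ne'] at h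
  exact_mod_cast mul_right_cancel₀ Real.pi_ne_zero h

theorem sin_node_pos {m j : ℕ} (hj : j ∈ Finset.Icc 1 m) :
    0 < Real.sin ((j : ℝ) * Real.pi / ((m : ℝ) + 1)) := by
  have hm : (0 : ℝ) < (m : ℝ) + 1 := by positivity
  have hj1 : (1 : ℝ) ≤ j := by exact_mod_cast (Finset.mem_Icc.mp hj).1
  have hjm : (j : ℝ) ≤ m := by exact_mod_cast (Finset.mem_Icc.mp hj).2
  apply Real.sin_pos_of_pos_of_lt_pi
  · positivity
  · rw [div_lt_iff₀ hm]
    nlinarith [Real.pi_pos]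

theorem eval_U_node {m j : ℕ} (hj : j ∈ Finset.Icc 1 m) :
    (Polynomial.Chebyshev.U ℝ (m : ℤ)).eval
      (Real.cos ((j : ℝ) * Real.pi / ((m : ℝ) + 1))) = 0 := by
  have hm : (m : ℝ) + 1 ≠ 0 := by positivity
  have h := Polynomial.Chebyshev.U_real_cos ((j : ℝ) * Real.pi / ((m : ℝ) + 1)) (m : ℤ)
  rw [Int.cast_natCast, mul_div_cancel₀ _ hm, Real.sin_nat_mul_pi] at h
  exact (mul_eq_zero.mp h).resolve_right (sin_node_pos hj).ne'

theorem eval_U_pred_node {m j : ℕ} (hj : j ∈ Finset.Icc 1 m) :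
    (Polynomial.Chebyshev.U ℝ ((m : ℤ) - 1)).eval
      (Real.cos ((j : ℝ) * Real.pi / ((m : ℝ) + 1))) = (-1) ^ (j + 1) := by
  have hm : (m : ℝ) + 1 ≠ 0 := by positivity
  have h := Polynomial.Chebyshev.U_real_cos ((j : ℝ) * Real.pi / ((m : ℝ) + 1)) ((m : ℤ) - 1)
  have hang : ((((m : ℤ) - 1 : ℤ) : ℝ) + 1) * ((j : ℝ) * Real.pi / ((m : ℝ) + 1)) =
      (j : ℝ) * Real.pi - (j : ℝ) * Real.pi / ((m : ℝ) + 1) := by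
    push_cast
    field_simp
    ring
  rw [hang, Real.sin_nat_mul_pi_sub] at h
  apply mul_right_cancel₀ (sin_node_pos hj).ne'
  rw [h]
  ring

theorem sin_sq_mul_eval_derivative_U_node {m j : ℕ} (hj : j ∈ Finset.Icc 1 m) :
    Real.sin ((j : ℝ) * Real.pi / ((m : ℝ) + 1)) ^ 2 *
      (Polynomial.Chebyshev.U ℝ (m : ℤ)).derivative.eval
        (Real.cos ((j : ℝ) * Real.pi / ((m : ℝ) + 1))) = ((m : ℝ) + 1) * (-1) ^ (j + 1) := by
  have hm : (m : ℝ) + 1 ≠ 0 := by positivity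
  have h := congrArg (Polynomial.eval (Real.cos ((j : ℝ) * Real.pi / ((m : ℝ) + 1))))
    (Polynomial.Chebyshev.add_one_mul_T_eq_poly_in_U (R := ℝ) (m : ℤ))
  have hT := Polynomial.Chebyshev.T_real_cos ((j : ℝ) * Real.pi / ((m : ℝ) + 1)) ((m : ℤ) + 1)
  rw [Int.cast_add, Int.cast_natCast, Int.cast_one, mul_div_cancel₀ _ hm,
    Real.cos_nat_mul_pi] at hT
  simp only [Polynomial.eval_mul, Polynomial.eval_add, Polynomial.eval_sub, Polynomial.eval_pow,
    Polynomial.eval_X, Polynomial.eval_one, Int.cast_natCast, Polynomial.eval_natCast, hT,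
    eval_U_node hj] at h
  rw [Real.sin_sq]
  linear_combination h

theorem degree_one_add_U_pred_lt {m : ℕ} (hm : 1 ≤ m) :
    (1 + Polynomial.Chebyshev.U ℝ ((m : ℤ) - 1)).degree < (m : WithBot ℕ) := by
  obtain ⟨n, rfl⟩ : ∃ n, m = n + 1 := ⟨m - 1, by omega⟩
  have hn : (((n + 1 : ℕ) : ℤ) - 1) = (n : ℤ) := by simp
  rw [hn]
  refine (Polynomial.degree_add_le _ _).trans_lt (max_lt ?_ ?_)
  · rw [Polynomial.degree_one]
    exact_mod_cast Nat.succ_pos n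
  · rw [Polynomial.Chebyshev.degree_U_natCast]
    exact_mod_cast Nat.lt_succ_self n

/-- Lemma 2.2 (second identity): partial fraction decomposition of
`(1 + U_{m-1}(x)) / U_m(x)`. -/
theorem one_add_U_div_U_partial_fractions (m : ℕ) (hm : 1 ≤ m) (x : ℝ)
    (hx : ∀ j ∈ Finset.Icc 1 m, x ≠ Real.cos ((j : ℝ) * Real.pi / ((m : ℝ) + 1))) :
    (1 + Ueval ((m : ℤ) - 1) x) / Ueval (m : ℤ) x =
      (1 / ((m : ℝ) + 1)) * ∑ j ∈ Finset.Icc 1 m,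
        (1 + (-1 : ℝ) ^ (j + 1)) * Real.sin ((j : ℝ) * Real.pi / ((m : ℝ) + 1)) ^ 2 /
          (x - Real.cos ((j : ℝ) * Real.pi / ((m : ℝ) + 1))) := by
  have hm0 : (m : ℝ) + 1 ≠ 0 := by positivity
  have hmain := eval_div_eval_eq_sum_of_simple_roots (Finset.Icc 1 m)
    (fun j : ℕ => Real.cos ((j : ℝ) * Real.pi / ((m : ℝ) + 1))) (injOn_cos_node m)
    (1 + Polynomial.Chebyshev.U ℝ ((m : ℤ) - 1)) (Polynomial.Chebyshev.U ℝ (m : ℤ))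
    (by rw [Polynomial.Chebyshev.degree_U_natCast, Nat.card_Icc, Nat.add_sub_cancel])
    (fun j hj => eval_U_node hj)
    (by rw [Nat.card_Icc, Nat.add_sub_cancel]; exact degree_one_add_U_pred_lt hm) x hx
  rw [Polynomial.eval_add, Polynomial.eval_one] at hmain
  unfold Ueval
  rw [hmain, Finset.mul_sum]
  refine Finset.sum_congr rfl fun j hj => ?_
  have hD := sin_sq_mul_eval_derivative_U_node hj
  have hxj : x - Real.cos ((j : ℝ) * Real.pi / ((m : ℝ) + 1)) ≠ 0 := sub_ne_zero.mpr (hx j hj)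
  rw [Polynomial.eval_add, Polynomial.eval_one, eval_U_pred_node hj]
  have hsq : ((-1 : ℝ) ^ (j + 1)) ^ 2 = 1 := by rw [← pow_mul, mul_comm, pow_mul]; simp
  have hε0 : (-1 : ℝ) ^ (j + 1) ≠ 0 := pow_ne_zero _ (by norm_num)
  generalize (-1 : ℝ) ^ (j + 1) = ε at hD hsq hε0 ⊢
  generalize (Polynomial.Chebyshev.U ℝ (m : ℤ)).derivative.eval
    (Real.cos ((j : ℝ) * Real.pi / ((m : ℝ) + 1))) = D at hD ⊢
  have hD0 : D ≠ 0 := by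
    rintro rfl
    exact mul_ne_zero hm0 hε0 (by simpa using hD.symm)
  rw [one_div_mul_eq_div, div_div, div_eq_div_iff (mul_ne_zero hD0 hxj) (mul_ne_zero hxj hm0)]
  -- `1 + ε = (1 + ε) ε` because `ε² = 1`.
  linear_combination (-(1 + ε) * (x - Real.cos ((j : ℝ) * Real.pi / ((m : ℝ) + 1)))) * hD -
    ((m : ℝ) + 1) * (x - Real.cos ((j : ℝ) * Real.pi / ((m : ℝ) + 1))) * hsq
end

section
/- Fix an integer k ≥ 1. Then scw_{n,k} / (1 + 2cos(π/(k+1)))^n tends to 1 as n → ∞. -/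
/-!
For `n ≥ 1` the count `scw n k` is the trace of `A ^ n`, where `A` is the transfer matrix of the
smoothness relation: the adjacency matrix of the path on `k` vertices with a loop added at each vertex
(`scw_succ_eq_trace`). The vectors `i ↦ sin (i j π / (k + 1))`, `1 ≤ i ≤ k`, are eigenvectors of
`A` with eigenvalues `1 + 2 cos (j π / (k + 1))` (`transfer_mul_sineMat`), which are distinct for
`1 ≤ j ≤ k`, so `A` is diagonalisable and `scw n k` is the sum of the `n`-th powers of these
eigenvalues (`trace_transfer_pow`). The eigenvalue with `j = 1` strictly dominates all the others
in absolute value (`abs_eig_lt`), hence after division by its `n`-th power only the term `1`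
survives in the limit.
-/

open Real Filter Finset

/-- The transfer matrix of smooth words: entry `1` when the two letters differ by at most `1`,
entry `0` otherwise. -/
def transfer (k : ℕ) : Matrix (Fin k) (Fin k) ℝ :=
  fun a b => if |((b : ℕ) : ℤ) - ((a : ℕ) : ℤ)| ≤ 1 then 1 else 0

/-- The angle `(j + 1) π / (k + 1)`, with `j` counted from `0`. -/
noncomputable def ang (k : ℕ) (j : Fin k) : ℝ := ((j : ℕ) + 1 : ℝ) * (Real.pi / ((k : ℝ) + 1))

/-- The eigenvalue `1 + 2 cos ((j + 1) π / (k + 1))` of the transfer matrix. -/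
noncomputable def eig (k : ℕ) (j : Fin k) : ℝ := 1 + 2 * Real.cos (ang k j)

/-- The matrix whose `j`-th column is the eigenvector of `transfer k` for `eig k j`. -/
noncomputable def sineMat (k : ℕ) : Matrix (Fin k) (Fin k) ℝ :=
  fun i j => Real.sin (((i : ℕ) + 1 : ℝ) * ang k j)

/-- Powers of a matrix as sums over walks. The weight `F` of the two endpoints is arbitrary so
that a walk can be shortened at its end, absorbing the last step into `F`, and so that closed
walks are covered as well. -/
lemma sum_walks {ι : Type*} [Fintype ι] [DecidableEq ι] (A : Matrix ι ι ℝ) (n : ℕ) :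
    ∀ F : ι → ι → ℝ,
      ∑ σ : Fin (n + 1) → ι, F (σ 0) (σ (Fin.last n)) * ∏ t : Fin n, A (σ t.castSucc) (σ t.succ)
        = ∑ i, ∑ j, F i j * (A ^ n) i j := by
  induction n with
  | zero =>
    intro F
    rw [← (Equiv.funUnique (Fin 1) ι).symm.sum_comp]
    simp [Matrix.one_apply]
  | succ n ih =>
    intro F
    rw [← (Fin.snocEquiv (fun _ : Fin (n + 2) => ι)).sum_comp, Fintype.sum_prod_type,
      Finset.sum_comm]
    have key := ih (fun i j => ∑ x, F i x * A j x)
    have h1 : ∀ (τ : Fin (n + 1) → ι) (x : ι),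
        F ((Fin.snoc τ x : Fin (n + 2) → ι) 0) ((Fin.snoc τ x : Fin (n + 2) → ι) (Fin.last (n + 1)))
          * ∏ t : Fin (n + 1), A ((Fin.snoc τ x : Fin (n + 2) → ι) t.castSucc)
            ((Fin.snoc τ x : Fin (n + 2) → ι) t.succ)
        = F (τ 0) x * A (τ (Fin.last n)) x * ∏ t : Fin n, A (τ t.castSucc) (τ t.succ) := by
      intro τ x
      rw [Fin.prod_univ_castSucc]
      have h0 : (Fin.snoc τ x : Fin (n + 2) → ι) 0 = τ 0 := by
        rw [← Fin.castSucc_zero, Fin.snoc_castSucc]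
      simp only [h0, Fin.snoc_last, Fin.snoc_castSucc, Fin.succ_last, Fin.succ_castSucc]
      ring
    refine Eq.trans (Finset.sum_congr rfl fun τ _ => Finset.sum_congr rfl fun x _ => h1 τ x) ?_
    simp only [Finset.sum_mul] at key
    rw [key]
    refine Finset.sum_congr rfl fun i _ => ?_
    rw [Finset.sum_comm]
    refine Finset.sum_congr rfl fun x _ => ?_
    rw [pow_succ, Matrix.mul_apply, Finset.mul_sum]
    exact Finset.sum_congr rfl fun j _ => by ring

lemma scw_succ_eq_trace (n k : ℕ) : (scw (n + 1) k : ℝ) = (transfer k ^ (n + 1)).trace := by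
  classical
  have h := sum_walks (transfer k) n (fun i j => transfer k j i)
  have hR : ∑ i, ∑ j, transfer k j i * (transfer k ^ n) i j = (transfer k ^ (n + 1)).trace := by
    rw [pow_succ, Matrix.trace]
    simp only [Matrix.diag_apply, Matrix.mul_apply]
    exact Finset.sum_congr rfl fun i _ => Finset.sum_congr rfl fun j _ => mul_comm _ _
  rw [← hR, ← h, scw, Nat.card_eq_fintype_card, Fintype.card_subtype, Finset.natCast_card_filter]
  refine Finset.sum_congr rfl fun σ _ => ?_
  simp only [transfer]
  rw [Finset.prod_ite_zero, ite_zero_mul_ite_zero]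
  simp only [Finset.prod_const_one, mul_one]
  refine if_congr ?_ rfl rfl
  constructor
  · rintro ⟨h1, h2⟩
    refine ⟨?_, fun t _ => h1 t (by omega)⟩
    have h3 := h2 (Nat.succ_pos n)
    rw [abs_sub_comm] at h3
    exact h3
  · rintro ⟨h1, h2⟩
    refine ⟨fun i hi => h2 ⟨i, by omega⟩ (Finset.mem_univ _), fun _ => ?_⟩
    rw [abs_sub_comm] at h1
    exact h1

lemma ang_pos (k : ℕ) (j : Fin k) : 0 < ang k j := by
  unfold ang; positivity

lemma ang_add_le_pi (k : ℕ) (j : Fin k) : ang k j + Real.pi / ((k : ℝ) + 1) ≤ Real.pi := by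
  have h : ((j : ℕ) : ℝ) + 1 ≤ k := by exact_mod_cast j.2
  have h0 : 0 < Real.pi / ((k : ℝ) + 1) := by positivity
  have h1 : ((k : ℝ) + 1) * (Real.pi / ((k : ℝ) + 1)) = Real.pi := by field_simp
  unfold ang
  nlinarith

lemma ang_lt_pi (k : ℕ) (j : Fin k) : ang k j < Real.pi := by
  have h0 : 0 < Real.pi / ((k : ℝ) + 1) := by positivity
  linarith [ang_add_le_pi k j]

lemma eig_injective (k : ℕ) : Function.Injective (eig k) := by
  intro a b hab
  have hc : Real.cos (ang k a) = Real.cos (ang k b) := by unfold eig at hab; linarith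
  have h := Real.injOn_cos ⟨(ang_pos k a).le, (ang_lt_pi k a).le⟩
    ⟨(ang_pos k b).le, (ang_lt_pi k b).le⟩ hc
  have h0 : Real.pi / ((k : ℝ) + 1) ≠ 0 := by positivity
  unfold ang at h
  have h1 := mul_right_cancel₀ h0 h
  exact Fin.ext (by exact_mod_cast add_right_cancel h1)

lemma transfer_mul_sineMat (k : ℕ) :
    transfer k * sineMat k = sineMat k * Matrix.diagonal (eig k) := by
  ext i j
  rw [Matrix.mul_diagonal, Matrix.mul_apply]
  set s : ℕ → ℝ := fun m => Real.sin ((m : ℝ) * ang k j) with hs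
  set f : ℕ → ℝ := fun m => if |(m : ℤ) - ((i : ℕ) + 1 : ℤ)| ≤ 1 then s m else 0 with hf
  have hs0 : s 0 = 0 := by simp [hs]
  have hsk : s (k + 1) = 0 := by
    have : ((k + 1 : ℕ) : ℝ) * ang k j = ((j : ℕ) + 1 : ℕ) * Real.pi := by
      unfold ang; push_cast; field_simp
    simp only [hs, this, Real.sin_nat_mul_pi]
  -- As `s` vanishes at `0` and `k + 1`, both boundary rows obey the same three-term relation.
  have h1 : ∑ l, transfer k i l * sineMat k l j = ∑ m ∈ Finset.range (k + 2), f m := by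
    have e0 : f 0 = 0 := by simp [hf, hs0]
    have ek : f (k + 1) = 0 := by simp [hf, hsk]
    rw [Finset.sum_range_succ, ek, add_zero, Finset.sum_range_succ', e0, add_zero,
      ← Fin.sum_univ_eq_sum_range (fun m => f (m + 1))]
    refine Finset.sum_congr rfl fun l _ => ?_
    simp [transfer, sineMat, hf, hs]
  have h2 : ∑ m ∈ Finset.range (k + 2), f m
      = ∑ m ∈ ({(i : ℕ), (i : ℕ) + 1, (i : ℕ) + 2} : Finset ℕ), f m := by
    symm
    refine Finset.sum_subset ?_ ?_
    · intro m hm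
      have := i.2
      simp only [Finset.mem_insert, Finset.mem_singleton] at hm
      rw [Finset.mem_range]; omega
    · intro m _ hm
      simp only [Finset.mem_insert, Finset.mem_singleton] at hm
      refine if_neg ?_
      rw [abs_le]; omega
  have h3 : f (i : ℕ) = s i := by simp [hf]
  have h4 : f ((i : ℕ) + 1) = s (i + 1) := by simp [hf]
  have h5 : f ((i : ℕ) + 2) = s (i + 2) := by
    refine if_pos ?_
    rw [abs_le]; omega
  rw [h1, h2, Finset.sum_insert (by simp), Finset.sum_insert (by simp), Finset.sum_singleton,
    h3, h4, h5]
  simp only [hs, sineMat, eig]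
  have e1 : ((i : ℕ) : ℝ) * ang k j = (((i : ℕ) : ℝ) + 1) * ang k j - ang k j := by ring
  have e2 : (((i : ℕ) + 2 : ℕ) : ℝ) * ang k j = (((i : ℕ) : ℝ) + 1) * ang k j + ang k j := by
    push_cast; ring
  rw [e1, e2, Real.sin_sub, Real.sin_add]
  push_cast
  ring

/-- The eigenvectors belong to distinct eigenvalues, so they form a basis. -/
lemma isUnit_sineMat (k : ℕ) : IsUnit (sineMat k) := by
  rw [← Matrix.linearIndependent_cols_iff_isUnit]
  refine Module.End.eigenvectors_linearIndependent' (Matrix.toLin' (transfer k)) (eig k)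
    (eig_injective k) _ fun j => ?_
  rw [Module.End.hasEigenvector_iff, Module.End.mem_eigenspace_iff]
  constructor
  · rw [Matrix.toLin'_apply]
    ext i
    have h := congrFun (congrFun (transfer_mul_sineMat k) i) j
    rw [Matrix.mul_diagonal, Matrix.mul_apply] at h
    simpa [Matrix.mulVec, dotProduct, Matrix.col_apply, mul_comm] using h
  · intro h0
    have h := congrFun h0 ⟨0, j.pos⟩
    have hp := Real.sin_pos_of_pos_of_lt_pi (ang_pos k j) (ang_lt_pi k j)
    simp [Matrix.col_apply, sineMat] at h
    linarith

lemma trace_transfer_pow (n k : ℕ) : (transfer k ^ n).trace = ∑ j, eig k j ^ n := by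
  obtain ⟨u, hu⟩ := isUnit_sineMat k
  have h : ∀ m, transfer k ^ m * u = u * Matrix.diagonal (eig k) ^ m := by
    intro m
    have h1 : SemiconjBy (u : Matrix (Fin k) (Fin k) ℝ) (Matrix.diagonal (eig k)) (transfer k) := by
      rw [SemiconjBy, hu, transfer_mul_sineMat]
    exact (h1.pow_right m).eq.symm
  have h2 : transfer k ^ n = u * Matrix.diagonal (eig k) ^ n * (u⁻¹ : (Matrix _ _ ℝ)ˣ) := by
    rw [← h, Units.mul_inv_cancel_right]
  rw [h2, Matrix.trace_mul_comm, ← mul_assoc, Units.inv_mul, one_mul, Matrix.diagonal_pow,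
    Matrix.trace_diagonal]
  rfl

lemma abs_eig_lt (k : ℕ) (j : Fin (k + 1)) (hj : j ≠ 0) : |eig (k + 1) j| < eig (k + 1) 0 := by
  have h0 : 0 < ang (k + 1) 0 := ang_pos _ _
  have hle := ang_add_le_pi (k + 1) j
  have e0 : ang (k + 1) 0 = Real.pi / (((k + 1 : ℕ) : ℝ) + 1) := by simp [ang]
  rw [← e0] at hle
  have hlt : ang (k + 1) 0 < ang (k + 1) j := by
    have : (0 : ℝ) < ((j : ℕ) : ℝ) := by exact_mod_cast Fin.pos_iff_ne_zero.mpr hj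
    have hp : 0 < Real.pi / (((k + 1 : ℕ) : ℝ) + 1) := by positivity
    rw [e0]; unfold ang
    nlinarith
  have c1 : Real.cos (ang (k + 1) j) < Real.cos (ang (k + 1) 0) :=
    Real.cos_lt_cos_of_nonneg_of_le_pi h0.le (ang_lt_pi _ _).le hlt
  -- The reflection `x ↦ π - x` of the angles bounds the most negative eigenvalue.
  have c2 : Real.cos (Real.pi - ang (k + 1) 0) ≤ Real.cos (ang (k + 1) j) :=
    Real.cos_le_cos_of_nonneg_of_le_pi (ang_pos _ _).le (by linarith) (by linarith)
  rw [Real.cos_pi_sub] at c2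
  unfold eig
  rw [abs_lt]
  constructor <;> linarith

/-- Corollary 3.4: asymptotics of the number of smooth cyclic words. -/
theorem smooth_cyclic_words_asymptotics (k : ℕ) (hk : 1 ≤ k) :
    Filter.Tendsto (fun n : ℕ => (scw n k : ℝ) /
        (1 + 2 * Real.cos (Real.pi / ((k : ℝ) + 1))) ^ n)
      Filter.atTop (nhds 1) := by
  obtain ⟨k, rfl⟩ : ∃ m, k = m + 1 := ⟨k - 1, by omega⟩
  have e0 : 1 + 2 * Real.cos (Real.pi / (((k + 1 : ℕ) : ℝ) + 1)) = eig (k + 1) 0 := by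
    simp [eig, ang]
  rw [e0]
  have hpos : 0 < eig (k + 1) 0 := by
    have hp : 0 < Real.pi / (((k + 1 : ℕ) : ℝ) + 1) := by positivity
    have h1 : 0 ≤ Real.cos (Real.pi / (((k + 1 : ℕ) : ℝ) + 1)) := by
      refine Real.cos_nonneg_of_neg_pi_div_two_le_of_le (by linarith [Real.pi_pos]) ?_
      refine div_le_div_of_nonneg_left Real.pi_pos.le (by norm_num) ?_
      push_cast
      linarith [(Nat.cast_nonneg k : (0 : ℝ) ≤ k)]
    rw [← e0]; linarith
  -- The trace formula needs positive length: the empty word is counted once, not `k` times.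
  rw [← Filter.tendsto_add_atTop_iff_nat 1]
  have hfun : ∀ n : ℕ, (scw (n + 1) (k + 1) : ℝ) / eig (k + 1) 0 ^ (n + 1)
      = ∑ j, (eig (k + 1) j / eig (k + 1) 0) ^ (n + 1) := by
    intro n
    rw [scw_succ_eq_trace, trace_transfer_pow, Finset.sum_div]
    exact Finset.sum_congr rfl fun j _ => (div_pow _ _ _).symm
  simp only [hfun]
  have hsum : (1 : ℝ) = ∑ j : Fin (k + 1), if j = 0 then 1 else 0 := by simp
  rw [hsum]
  refine tendsto_finsetSum _ fun j _ => ?_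
  by_cases hj : j = 0
  · simp [hj, div_self hpos.ne']
  · rw [if_neg hj]
    refine (tendsto_pow_atTop_nhds_zero_of_abs_lt_one ?_).comp (Filter.tendsto_add_atTop_nat 1)
    rw [abs_div, abs_of_pos hpos, div_lt_one hpos]
    exact abs_eig_lt k j hj
end
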